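/- For every n ≥ 2, the pattern counts of the Sierpiński triangle satisfy C_{2n} + 6 = A_n + 2·C_{n+1} + D_{n+1} and C_{2n+1} + 6 = C_{n+1} + 2·B_{n+1} + D_{n+2}. -/

import Mathlib

/-- Whether the unit triangle at row `r`, column `c` of the Sierpiński triangle is filled:
upward units `(r, 2j)` are filled iff `choose r j` is odd; downward units are unfilled. -/
def filled (r c : ℕ) : Bool :=
  decide (c % 2 = 0 ∧ Nat.choose r (c / 2) % 2 = 1)

/-- The upward pattern of size `n` at upward position `(r, c)`. -/
def upPattern (n r c : ℕ) : ℕ × ℕ → Bool := fun q =>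
  if q.1 < n ∧ q.2 ≤ 2 * q.1 then filled (r + q.1) (c + q.2) else false

/-- The set of all upward patterns of size `n` occurring in the Sierpiński triangle. -/
def Pup (n : ℕ) : Set (ℕ × ℕ → Bool) :=
  { p | ∃ r c : ℕ, c % 2 = 0 ∧ c ≤ 2 * r ∧ p = upPattern n r c }

/-- The downward pattern of size `n` at downward position `(r, c)`. -/
def downPattern (n r c : ℕ) : ℕ × ℕ → Bool := fun q =>
  if q.1 < n ∧ q.2 ≤ 2 * (n - 1 - q.1) then filled (r + q.1) (c + 2 * q.1 + q.2) else false

/-- The set of all downward patterns of size `n` occurring in the Sierpiński triangle. -/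
def Pdown (n : ℕ) : Set (ℕ × ℕ → Bool) :=
  { p | ∃ r c : ℕ, c % 2 = 1 ∧ c + 2 * (n - 1) ≤ 2 * r ∧ p = downPattern n r c }

/-- The top-cut pattern of size `n` at upward position `(r, c)` (apex unit removed). -/
def topCutPattern (n r c : ℕ) : ℕ × ℕ → Bool := fun q =>
  if 1 ≤ q.1 ∧ q.1 < n ∧ q.2 ≤ 2 * q.1 then filled (r + q.1) (c + q.2) else false

/-- The set of all top-cut patterns of size `n` occurring in the Sierpiński triangle. -/
def PtopCut (n : ℕ) : Set (ℕ × ℕ → Bool) :=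
  { p | ∃ r c : ℕ, c % 2 = 0 ∧ c ≤ 2 * r ∧ p = topCutPattern n r c }

/-- The bottom-cut pattern of size `n` at upward position `(r, c)`
(both bottom corner units removed). -/
def botCutPattern (n r c : ℕ) : ℕ × ℕ → Bool := fun q =>
  if (q.1 < n ∧ q.2 ≤ 2 * q.1) ∧ ¬(q.1 = n - 1 ∧ (q.2 = 0 ∨ q.2 = 2 * (n - 1)))
  then filled (r + q.1) (c + q.2) else false

/-- The set of all bottom-cut patterns of size `n` occurring in the Sierpiński triangle. -/
def PbotCut (n : ℕ) : Set (ℕ × ℕ → Bool) :=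
  { p | ∃ r c : ℕ, c % 2 = 0 ∧ c ≤ 2 * r ∧ p = botCutPattern n r c }

/-- The fully-cut pattern of size `n` at upward position `(r, c)`
(all three corner units removed). -/
def fullyCutPattern (n r c : ℕ) : ℕ × ℕ → Bool := fun q =>
  if (q.1 < n ∧ q.2 ≤ 2 * q.1) ∧ q ≠ (0, 0) ∧ ¬(q.1 = n - 1 ∧ (q.2 = 0 ∨ q.2 = 2 * (n - 1)))
  then filled (r + q.1) (c + q.2) else false

/-- The set of all fully-cut patterns of size `n` occurring in the Sierpiński triangle. -/
def PfullyCut (n : ℕ) : Set (ℕ × ℕ → Bool) :=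
  { p | ∃ r c : ℕ, c % 2 = 0 ∧ c ≤ 2 * r ∧ p = fullyCutPattern n r c }

/-- Upward patterns of size `m` occurring inside the approximation `T_N`
(rows `0, …, 2^N - 1`). -/
def PupN (N m : ℕ) : Set (ℕ × ℕ → Bool) :=
  { p | ∃ r c : ℕ, c % 2 = 0 ∧ c ≤ 2 * r ∧ r + m ≤ 2 ^ N ∧ p = upPattern m r c }

/-- Upward patterns of size `n` at positions with `r ≡ ρ [MOD 2]` and `c ≡ γ [MOD 4]`. -/
def PupRC (n ρ γ : ℕ) : Set (ℕ × ℕ → Bool) :=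
  { p | ∃ r c : ℕ, c % 2 = 0 ∧ c ≤ 2 * r ∧ r % 2 = ρ ∧ c % 4 = γ ∧ p = upPattern n r c }

/-- Downward patterns of size `n` at positions with `r ≡ ρ [MOD 2]` and `c ≡ γ [MOD 4]`. -/
def PdownRC (n ρ γ : ℕ) : Set (ℕ × ℕ → Bool) :=
  { p | ∃ r c : ℕ, c % 2 = 1 ∧ c + 2 * (n - 1) ≤ 2 * r ∧ r % 2 = ρ ∧ c % 4 = γ ∧
      p = downPattern n r c }

/-- Top-cut patterns of size `n` at positions with `r ≡ ρ [MOD 2]` and `c ≡ γ [MOD 4]`. -/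
def PtopCutRC (n ρ γ : ℕ) : Set (ℕ × ℕ → Bool) :=
  { p | ∃ r c : ℕ, c % 2 = 0 ∧ c ≤ 2 * r ∧ r % 2 = ρ ∧ c % 4 = γ ∧ p = topCutPattern n r c }

/-- Fully-cut patterns of size `n` at positions with `r ≡ ρ [MOD 2]` and `c ≡ γ [MOD 4]`. -/
def PfullyCutRC (n ρ γ : ℕ) : Set (ℕ × ℕ → Bool) :=
  { p | ∃ r c : ℕ, c % 2 = 0 ∧ c ≤ 2 * r ∧ r % 2 = ρ ∧ c % 4 = γ ∧ p = fullyCutPattern n r c }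

/-- The everywhere-unfilled upward pattern. -/
def blankUp : ℕ × ℕ → Bool := fun _ => false

/-- The upward pattern that is filled exactly at the apex `(0, 0)`. -/
def topUp : ℕ × ℕ → Bool := fun q => decide (q = (0, 0))

/-- The size-`N` upward pattern that is filled exactly at the bottom-left corner `(N-1, 0)`. -/
def botleftUp (N : ℕ) : ℕ × ℕ → Bool := fun q => decide (q = (N - 1, 0))

/-- The size-`N` upward pattern filled exactly at the bottom-right corner `(N-1, 2(N-1))`. -/
def botrightUp (N : ℕ) : ℕ × ℕ → Bool := fun q => decide (q = (N - 1, 2 * (N - 1)))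

/-- The everywhere-unfilled downward pattern. -/
def blankDown : ℕ × ℕ → Bool := fun _ => false

/-- The size-`N` downward pattern filled exactly at the upward units along the top side:
positions `(0, m)` with `m` odd, `1 ≤ m ≤ 2N - 3`. -/
def topsideDown (N : ℕ) : ℕ × ℕ → Bool := fun q =>
  decide (q.1 = 0 ∧ q.2 % 2 = 1 ∧ 1 ≤ q.2 ∧ q.2 ≤ 2 * N - 3)

/-- The size-`N` downward pattern filled exactly at the upward units along the left side:
positions `(k, 1)` with `0 ≤ k ≤ N - 2`. -/
def leftsideDown (N : ℕ) : ℕ × ℕ → Bool := fun q =>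
  decide (q.2 = 1 ∧ q.1 ≤ N - 2)

/-- The size-`N` downward pattern filled exactly at the upward units along the right side:
positions `(k, 2(N-1-k) - 1)` with `0 ≤ k ≤ N - 2`. -/
def rightsideDown (N : ℕ) : ℕ × ℕ → Bool := fun q =>
  decide (q.1 ≤ N - 2 ∧ q.2 = 2 * (N - 1 - q.1) - 1)

/-!
By Lucas' theorem the triangle is its own image under the substitution replacing every filled
upward unit by a 2 × 2 block with three filled units, and every blank one by a blank block. A
pattern seen through a window `w` at a position of known parity is therefore determined by, and
determines, the pattern of the desubstituted triangle seen through the window of blocks that `w`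
meets. For bottom-cut windows the four parity classes give as windows a full, two bottom-cut and a
fully-cut triangle when the size is even, and a bottom-cut, two one-corner-cut and a fully-cut
triangle when it is odd. The one-corner-cut triangles have equally many patterns because the 120°
rotation preserves the triangles formed by the first `2 ^ s` rows.

It remains to count the patterns lying in several classes. A filled unit brings with it the two
other units of its block, so a pattern read with two different parities can only be filled where
the window ends: it is blank, or a tip next to one of the three corners. The blank pattern lies in
all four classes and each tip in two, an excess of 3 + 1 + 1 + 1 = 6.
-/

namespace Sierpinski

open scoped Finset

/-! ### Pascal's triangle modulo two -/

theorem odd_choose_iff_half (i j : ℕ) :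
    Odd (i.choose j) ↔ j % 2 ≤ i % 2 ∧ Odd ((i / 2).choose (j / 2)) := by
  have lucas : i.choose j % 2 = (i % 2).choose (j % 2) * (i / 2).choose (j / 2) % 2 :=
    have : Fact (Nat.Prime 2) := ⟨Nat.prime_two⟩
    Choose.choose_modEq_choose_mod_mul_choose_div_nat
  rw [Nat.odd_iff, lucas, Nat.odd_iff]
  rcases Nat.mod_two_eq_zero_or_one i with hi | hi <;>
    rcases Nat.mod_two_eq_zero_or_one j with hj | hj <;> simp [hi, hj]

theorem odd_choose_add_two_pow_iff {s j : ℕ} (i : ℕ) (hj : j < 2 ^ s) :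
    Odd ((i + 2 ^ s).choose j) ↔ Odd (i.choose j) := by
  induction s generalizing i j with
  | zero => simp [Nat.lt_one_iff.mp hj]
  | succ s ih =>
    rw [pow_succ] at hj ⊢
    have hdiv : (i + 2 ^ s * 2) / 2 = i / 2 + 2 ^ s := by omega
    have hmod : (i + 2 ^ s * 2) % 2 = i % 2 := by omega
    rw [odd_choose_iff_half, odd_choose_iff_half i, hdiv, hmod, ih _ (by omega)]

theorem odd_choose_rotate_iff {s i j : ℕ} (hi : i < 2 ^ s) (hj : j ≤ i) :
    Odd ((2 ^ s - 1 - j).choose (i - j)) ↔ Odd (i.choose j) := by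
  induction s generalizing i j with
  | zero =>
    obtain rfl : i = 0 := by omega
    obtain rfl : j = 0 := by omega
    rfl
  | succ s ih =>
    rw [pow_succ] at hi ⊢
    rw [odd_choose_iff_half, odd_choose_iff_half i]
    by_cases hle : j % 2 ≤ i % 2
    · have hrow : (2 ^ s * 2 - 1 - j) / 2 = 2 ^ s - 1 - j / 2 := by omega
      have hcol : (i - j) / 2 = i / 2 - j / 2 := by omega
      rw [hrow, hcol, ih (by omega) (by omega)]
      exact and_congr_left fun _ ↦ by omega
    · exact iff_of_false (fun h ↦ by omega) (fun h ↦ hle h.1)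

/-! ### Patterns seen through a window -/

variable {N : ℕ} {w w' : Set (ℕ × ℕ)} {c q r x y : ℕ × ℕ}

/-- The pattern of the Sierpiński triangle seen through the window `w` placed at `x`, as the set of
its filled units. Downward units being unfilled, only upward ones are recorded: the pair `(i, j)`
stands for the unit in row `i` and column `2 * j`. -/
def pattern (w : Set (ℕ × ℕ)) (x : ℕ × ℕ) : Set (ℕ × ℕ) :=
  {q ∈ w | Odd ((x.1 + q.1).choose (x.2 + q.2))}

/-- The patterns seen through the window `w` placed at the upward positions of the Sierpiński
triangle. -/
def patterns (w : Set (ℕ × ℕ)) : Set (Set (ℕ × ℕ)) :=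
  pattern w '' {x | x.2 ≤ x.1}

/-- Two positions have the same place in the 2 × 2 blocks of the substitution. -/
abbrev SameParity (x y : ℕ × ℕ) : Prop :=
  x.1 % 2 = y.1 % 2 ∧ x.2 % 2 = y.2 % 2

/-- The patterns seen through the window `w` placed at the upward positions congruent to `c`
modulo two. -/
def patternsMod (w : Set (ℕ × ℕ)) (c : ℕ × ℕ) : Set (Set (ℕ × ℕ)) :=
  pattern w '' {x | x.2 ≤ x.1 ∧ SameParity x c}

theorem pattern_subset : pattern w x ⊆ w :=
  Set.sep_subset _ _

theorem patterns_finite (hw : w.Finite) : (patterns w).Finite :=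
  hw.finite_subsets.subset <| Set.image_subset_iff.mpr fun _ _ ↦ pattern_subset

theorem patternsMod_subset_patterns : patternsMod w c ⊆ patterns w :=
  Set.image_mono fun _ hx ↦ hx.1

/-- One representative of each class of positions modulo two. The class of `(0, 1)` is represented
by `(2, 1)` so that the positions of each class `c` are the `2 * y + c`, with `y` a position. -/
def offsets : Finset (ℕ × ℕ) :=
  {(0, 0), (1, 0), (1, 1), (2, 1)}

theorem card_filter_sameParity_offsets (x : ℕ × ℕ) : #{c ∈ offsets | SameParity x c} = 1 := by
  rcases Nat.mod_two_eq_zero_or_one x.1 with h₁ | h₁ <;>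
    rcases Nat.mod_two_eq_zero_or_one x.2 with h₂ | h₂ <;>
      simp [offsets, SameParity, Finset.filter_insert, Finset.filter_singleton, h₁, h₂]

/-! ### Windows -/

/-- The triangular window of size `N`. -/
def full (N : ℕ) : Set (ℕ × ℕ) :=
  {q | q.2 ≤ q.1 ∧ q.1 < N}

/-- The triangular window without its apex. -/
def topCut (N : ℕ) : Set (ℕ × ℕ) :=
  full N \ {(0, 0)}

/-- The triangular window without its bottom-left corner. -/
def leftCut (N : ℕ) : Set (ℕ × ℕ) :=
  full N \ {(N - 1, 0)}

/-- The triangular window without its bottom-right corner. -/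
def rightCut (N : ℕ) : Set (ℕ × ℕ) :=
  full N \ {(N - 1, N - 1)}

/-- The triangular window without its two bottom corners. -/
def botCut (N : ℕ) : Set (ℕ × ℕ) :=
  full N \ {(N - 1, 0), (N - 1, N - 1)}

/-- The triangular window without its three corners. -/
def fullyCut (N : ℕ) : Set (ℕ × ℕ) :=
  full N \ {(0, 0), (N - 1, 0), (N - 1, N - 1)}

section Membership

variable (k m : ℕ)

theorem mk_mem_full : (k, m) ∈ full N ↔ m ≤ k ∧ k < N :=
  Iff.rfl

theorem mk_mem_topCut : (k, m) ∈ topCut N ↔ (m ≤ k ∧ k < N) ∧ ¬(k = 0 ∧ m = 0) := by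
  simp [topCut, mk_mem_full]

theorem mk_mem_leftCut : (k, m) ∈ leftCut N ↔ (m ≤ k ∧ k < N) ∧ ¬(k = N - 1 ∧ m = 0) := by
  simp [leftCut, mk_mem_full]

theorem mk_mem_rightCut : (k, m) ∈ rightCut N ↔ (m ≤ k ∧ k < N) ∧ ¬(k = N - 1 ∧ m = N - 1) := by
  simp [rightCut, mk_mem_full]

theorem mk_mem_botCut :
    (k, m) ∈ botCut N ↔ (m ≤ k ∧ k < N) ∧ ¬(k = N - 1 ∧ m = 0) ∧ ¬(k = N - 1 ∧ m = N - 1) := by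
  simp [botCut, mk_mem_full]

theorem mk_mem_fullyCut :
    (k, m) ∈ fullyCut N ↔ (m ≤ k ∧ k < N) ∧
      ¬(k = 0 ∧ m = 0) ∧ ¬(k = N - 1 ∧ m = 0) ∧ ¬(k = N - 1 ∧ m = N - 1) := by
  simp [fullyCut, mk_mem_full]

end Membership

theorem full_finite (N : ℕ) : (full N).Finite :=
  ((Set.finite_Iio N).prod (Set.finite_Iio N)).subset fun _ hq ↦ ⟨hq.2, hq.1.trans_lt hq.2⟩

/-! ### Rotating the window -/

/-- The rotation of the triangle of size `N` moving the bottom-right corner to the apex. -/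
def rotate (N : ℕ) (q : ℕ × ℕ) : ℕ × ℕ :=
  (N - 1 - q.2, q.1 - q.2)

theorem exists_odd_choose_add_rotate_iff (N : ℕ) (hx : x.2 ≤ x.1) :
    ∃ y : ℕ × ℕ, y.2 ≤ y.1 ∧ ∀ q ∈ full N,
      (Odd ((y.1 + (rotate N q).1).choose (y.2 + (rotate N q).2)) ↔
        Odd ((x.1 + q.1).choose (x.2 + q.2))) := by
  have hs : x.1 + N < 2 ^ (x.1 + N) := Nat.lt_two_pow_self
  refine ⟨(2 ^ (x.1 + N) - N - x.2, x.1 - x.2), by dsimp only; omega, fun q ⟨hq, hqN⟩ ↦ ?_⟩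
  have hrow : 2 ^ (x.1 + N) - N - x.2 + (N - 1 - q.2) = 2 ^ (x.1 + N) - 1 - (x.2 + q.2) := by
    omega
  have hcol : x.1 - x.2 + (q.1 - q.2) = x.1 + q.1 - (x.2 + q.2) := by omega
  simp only [rotate]
  rw [hrow, hcol, odd_choose_rotate_iff (by omega) (by omega)]

theorem ncard_patterns_le_of_mapsTo_rotate (hw : w ⊆ full N) (hw' : w'.Finite)
    (hrot : Set.MapsTo (rotate N) w w') : (patterns w).ncard ≤ (patterns w').ncard := by
  have hsub : patterns w ⊆ (fun p ↦ {q ∈ w | rotate N q ∈ p}) '' patterns w' := by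
    rintro _ ⟨x, hx, rfl⟩
    obtain ⟨y, hy, hxy⟩ := exists_odd_choose_add_rotate_iff N hx
    refine ⟨_, ⟨y, hy, rfl⟩, Set.ext fun q ↦ and_congr_right fun hq ↦ ?_⟩
    exact (and_iff_right (hrot hq)).trans (hxy q (hw hq))
  have hfin := patterns_finite hw'
  exact (Set.ncard_le_ncard hsub (hfin.image _)).trans (Set.ncard_image_le hfin)

theorem ncard_patterns_topCut_le_leftCut (N : ℕ) :
    (patterns (topCut N)).ncard ≤ (patterns (leftCut N)).ncard := by
  refine ncard_patterns_le_of_mapsTo_rotate Set.sdiff_subset (full_finite N).sdiff ?_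
  rintro ⟨k, m⟩ hq
  rw [mk_mem_topCut] at hq
  simp only [rotate, mk_mem_leftCut]
  omega

theorem ncard_patterns_leftCut_le_rightCut (N : ℕ) :
    (patterns (leftCut N)).ncard ≤ (patterns (rightCut N)).ncard := by
  refine ncard_patterns_le_of_mapsTo_rotate Set.sdiff_subset (full_finite N).sdiff ?_
  rintro ⟨k, m⟩ hq
  rw [mk_mem_leftCut] at hq
  simp only [rotate, mk_mem_rightCut]
  omega

theorem ncard_patterns_rightCut_le_topCut (N : ℕ) :
    (patterns (rightCut N)).ncard ≤ (patterns (topCut N)).ncard := by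
  refine ncard_patterns_le_of_mapsTo_rotate Set.sdiff_subset (full_finite N).sdiff ?_
  rintro ⟨k, m⟩ hq
  rw [mk_mem_rightCut] at hq
  simp only [rotate, mk_mem_topCut]
  omega

theorem ncard_patterns_leftCut (N : ℕ) :
    (patterns (leftCut N)).ncard = (patterns (topCut N)).ncard :=
  ((ncard_patterns_leftCut_le_rightCut N).trans (ncard_patterns_rightCut_le_topCut N)).antisymm
    (ncard_patterns_topCut_le_leftCut N)

theorem ncard_patterns_rightCut (N : ℕ) :
    (patterns (rightCut N)).ncard = (patterns (topCut N)).ncard :=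
  (ncard_patterns_rightCut_le_topCut N).antisymm
    ((ncard_patterns_topCut_le_leftCut N).trans (ncard_patterns_leftCut_le_rightCut N))

/-! ### Desubstitution -/

/-- The 2 × 2 block of the unit `q` of a window placed at `c`. -/
def block (c q : ℕ × ℕ) : ℕ × ℕ :=
  ((c.1 + q.1) / 2, (c.2 + q.2) / 2)

/-- The window through which one has to look at the desubstituted triangle in order to recover what
the window `w` shows at positions `c` modulo two: the 2 × 2 blocks met by a unit of `w` other than
the one which is never filled. -/
def coarsen (w : Set (ℕ × ℕ)) (c : ℕ × ℕ) : Set (ℕ × ℕ) :=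
  block c '' {q ∈ w | (c.2 + q.2) % 2 ≤ (c.1 + q.1) % 2}

theorem mem_pattern_two_mul_add_iff :
    q ∈ pattern w (2 * x.1 + c.1, 2 * x.2 + c.2) ↔
      q ∈ w ∧ (c.2 + q.2) % 2 ≤ (c.1 + q.1) % 2 ∧ block c q ∈ pattern (coarsen w c) x := by
  have hdiv (a b k : ℕ) : (2 * a + b + k) / 2 = a + (b + k) / 2 := by omega
  have hmod (a b k : ℕ) : (2 * a + b + k) % 2 = (b + k) % 2 := by omega
  simp only [pattern, block, Set.mem_ofPred_eq, odd_choose_iff_half (2 * x.1 + c.1 + q.1), hdiv,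
    hmod]
  exact and_congr_right fun hq ↦ and_congr_right fun hle ↦ (and_iff_right ⟨q, ⟨hq, hle⟩, rfl⟩).symm

theorem pattern_coarsen_eq_image :
    pattern (coarsen w c) x = block c '' pattern w (2 * x.1 + c.1, 2 * x.2 + c.2) := by
  ext u
  constructor
  · intro hu
    obtain ⟨q, ⟨hq, hle⟩, rfl⟩ := pattern_subset hu
    exact ⟨q, mem_pattern_two_mul_add_iff.mpr ⟨hq, hle, hu⟩, rfl⟩
  · rintro ⟨q, hq, rfl⟩
    exact (mem_pattern_two_mul_add_iff.mp hq).2.2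

theorem patternsMod_eq_image (hc : c ∈ offsets) :
    patternsMod w c =
      (fun x : ℕ × ℕ ↦ pattern w (2 * x.1 + c.1, 2 * x.2 + c.2)) '' {x | x.2 ≤ x.1} := by
  obtain ⟨h₁, h₂, h₃⟩ : c.2 ≤ 1 ∧ c.2 ≤ c.1 ∧ c.1 ≤ c.2 + 1 := by
    revert c; decide
  ext p
  constructor
  · rintro ⟨x, ⟨hx, hx₁, hx₂⟩, rfl⟩
    refine ⟨((x.1 - c.1) / 2, (x.2 - c.2) / 2), ?_, ?_⟩
    · simp only [Set.mem_ofPred_eq]; omega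
    · exact congrArg _ (Prod.ext (by dsimp only; omega) (by dsimp only; omega))
  · rintro ⟨x, hx : x.2 ≤ x.1, rfl⟩
    exact ⟨_, ⟨by dsimp only; omega, by dsimp only; omega, by dsimp only; omega⟩, rfl⟩

theorem ncard_patternsMod (hc : c ∈ offsets) :
    (patternsMod w c).ncard = (patterns (coarsen w c)).ncard := by
  have himage : patterns (coarsen w c) = Set.image (block c) '' patternsMod w c := by
    rw [patternsMod_eq_image hc, Set.image_image]
    simp only [patterns, pattern_coarsen_eq_image]
  have hinj : Set.InjOn (Set.image (block c)) (patternsMod w c) := by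
    rw [patternsMod_eq_image hc]
    rintro _ ⟨x, -, rfl⟩ _ ⟨y, -, rfl⟩ (hxy : block c '' _ = block c '' _)
    rw [← pattern_coarsen_eq_image, ← pattern_coarsen_eq_image] at hxy
    ext q
    rw [mem_pattern_two_mul_add_iff, mem_pattern_two_mul_add_iff, hxy]
  rw [himage, hinj.ncard_image]

theorem mk_mem_coarsen_iff (k m : ℕ) :
    (k, m) ∈ coarsen w c ↔
      (c.1 ≤ 2 * k ∧ c.2 ≤ 2 * m ∧ (2 * k - c.1, 2 * m - c.2) ∈ w) ∨
      (c.1 ≤ 2 * k + 1 ∧ c.2 ≤ 2 * m ∧ (2 * k + 1 - c.1, 2 * m - c.2) ∈ w) ∨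
      (c.1 ≤ 2 * k + 1 ∧ c.2 ≤ 2 * m + 1 ∧ (2 * k + 1 - c.1, 2 * m + 1 - c.2) ∈ w) := by
  simp only [coarsen, block, Set.mem_image, Set.mem_ofPred_eq, Prod.mk.injEq]
  constructor
  · rintro ⟨⟨a, b⟩, ⟨hq, hle⟩, rfl, rfl⟩
    dsimp only at hle
    have hrow (e : ℕ) (he : (c.1 + a) % 2 = e) : 2 * ((c.1 + a) / 2) + e - c.1 = a := by omega
    have hcol (e : ℕ) (he : (c.2 + b) % 2 = e) : 2 * ((c.2 + b) / 2) + e - c.2 = b := by omega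
    rcases Nat.mod_two_eq_zero_or_one (c.1 + a) with ha | ha <;>
      rcases Nat.mod_two_eq_zero_or_one (c.2 + b) with hb | hb
    · exact .inl ⟨by omega, by omega, by rwa [← hrow 0 ha, ← hcol 0 hb] at hq⟩
    · omega
    · exact .inr (.inl ⟨by omega, by omega, by rwa [← hrow 1 ha, ← hcol 0 hb] at hq⟩)
    · exact .inr (.inr ⟨by omega, by omega, by rwa [← hrow 1 ha, ← hcol 1 hb] at hq⟩)
  · rintro (⟨h₁, h₂, hq⟩ | ⟨h₁, h₂, hq⟩ | ⟨h₁, h₂, hq⟩) <;>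
      exact ⟨_, ⟨hq, by dsimp only; omega⟩, by dsimp only; omega, by dsimp only; omega⟩

variable {n : ℕ}

theorem coarsen_botCut_two_mul_zero_zero (hn : 2 ≤ n) :
    coarsen (botCut (2 * n)) (0, 0) = full n := by
  ext ⟨k, m⟩
  simp only [mk_mem_coarsen_iff, mk_mem_botCut, mk_mem_full]
  omega

theorem coarsen_botCut_two_mul_one_zero (hn : 2 ≤ n) :
    coarsen (botCut (2 * n)) (1, 0) = botCut (n + 1) := by
  ext ⟨k, m⟩
  simp only [mk_mem_coarsen_iff, mk_mem_botCut]
  omega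

theorem coarsen_botCut_two_mul_one_one (hn : 2 ≤ n) :
    coarsen (botCut (2 * n)) (1, 1) = botCut (n + 1) := by
  ext ⟨k, m⟩
  simp only [mk_mem_coarsen_iff, mk_mem_botCut]
  omega

theorem coarsen_botCut_two_mul_two_one (hn : 2 ≤ n) :
    coarsen (botCut (2 * n)) (2, 1) = fullyCut (n + 1) := by
  ext ⟨k, m⟩
  simp only [mk_mem_coarsen_iff, mk_mem_botCut, mk_mem_fullyCut]
  omega

theorem coarsen_botCut_two_mul_add_one_zero_zero (hn : 1 ≤ n) :
    coarsen (botCut (2 * n + 1)) (0, 0) = botCut (n + 1) := by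
  ext ⟨k, m⟩
  simp only [mk_mem_coarsen_iff, mk_mem_botCut]
  omega

theorem coarsen_botCut_two_mul_add_one_one_zero (hn : 1 ≤ n) :
    coarsen (botCut (2 * n + 1)) (1, 0) = rightCut (n + 1) := by
  ext ⟨k, m⟩
  simp only [mk_mem_coarsen_iff, mk_mem_botCut, mk_mem_rightCut]
  omega

theorem coarsen_botCut_two_mul_add_one_one_one (hn : 1 ≤ n) :
    coarsen (botCut (2 * n + 1)) (1, 1) = leftCut (n + 1) := by
  ext ⟨k, m⟩
  simp only [mk_mem_coarsen_iff, mk_mem_botCut, mk_mem_leftCut]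
  omega

theorem coarsen_botCut_two_mul_add_one_two_one (n : ℕ) :
    coarsen (botCut (2 * n + 1)) (2, 1) = fullyCut (n + 2) := by
  ext ⟨k, m⟩
  simp only [mk_mem_coarsen_iff, mk_mem_botCut, mk_mem_fullyCut]
  omega

/-! ### Patterns occurring in several classes -/

theorem mod_two_le_of_mem_pattern (hq : q ∈ pattern w x) :
    (x.2 + q.2) % 2 ≤ (x.1 + q.1) % 2 :=
  ((odd_choose_iff_half _ _).mp hq.2).1

theorem mem_pattern_of_half_eq (hq : q ∈ pattern w x) (hr : r ∈ w)
    (hrow : (x.1 + r.1) / 2 = (x.1 + q.1) / 2) (hcol : (x.2 + r.2) / 2 = (x.2 + q.2) / 2)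
    (hle : (x.2 + r.2) % 2 ≤ (x.1 + r.1) % 2) : r ∈ pattern w x := by
  refine ⟨hr, (odd_choose_iff_half _ _).mpr ⟨hle, ?_⟩⟩
  rw [hrow, hcol]
  exact ((odd_choose_iff_half _ _).mp hq.2).2

/-- The pattern filled exactly at the apex. -/
def topTip : Set (ℕ × ℕ) :=
  {(0, 0)}

/-- The pattern of size `N` filled exactly at the two units next to the bottom-left corner. -/
def leftTip (N : ℕ) : Set (ℕ × ℕ) :=
  {(N - 2, 0), (N - 1, 1)}

/-- The pattern of size `N` filled exactly at the two units next to the bottom-right corner. -/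
def rightTip (N : ℕ) : Set (ℕ × ℕ) :=
  {(N - 2, N - 2), (N - 1, N - 2)}

-- Seen through `w`, the unit `(a, b)` would be filled at `x`, like `(k, m)`, and blank at `y`.
theorem notMem_of_pattern_eq {k m a b : ℕ} (hxy : pattern w x = pattern w y)
    (hq : (k, m) ∈ pattern w x) (hrow : (x.1 + a) / 2 = (x.1 + k) / 2)
    (hcol : (x.2 + b) / 2 = (x.2 + m) / 2) (hx : (x.2 + b) % 2 ≤ (x.1 + a) % 2)
    (hy : (y.1 + a) % 2 < (y.2 + b) % 2) : (a, b) ∉ w := fun h ↦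
  hy.not_ge <| mod_two_le_of_mem_pattern (hxy ▸ mem_pattern_of_half_eq hq h hrow hcol hx)

section Overlap

variable (hxy : pattern (botCut N) x = pattern (botCut N) y)
include hxy

theorem pattern_subset_topTip (hrow : x.1 % 2 = y.1 % 2) (hcol : x.2 % 2 ≠ y.2 % 2) :
    pattern (botCut N) x ⊆ topTip := by
  rintro ⟨k, m⟩ hq
  wlog hpar : (x.2 + m) % 2 = 0 generalizing x y
  · exact this hxy.symm hrow.symm hcol.symm (hxy ▸ hq) (by omega)
  have hy : (y.2 + m) % 2 ≤ (y.1 + k) % 2 := mod_two_le_of_mem_pattern (hxy ▸ hq)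
  have hmem := pattern_subset hq
  rcases k with - | k
  · obtain rfl : m = 0 := by simpa using hmem.1.1
    rfl
  have habove : (k, m) ∉ botCut N :=
    notMem_of_pattern_eq hxy hq (by omega) (by omega) (by omega) (by omega)
  rcases m with - | m
  · simp only [mk_mem_botCut] at hmem habove
    omega
  have hleft : (k, m) ∉ botCut N :=
    notMem_of_pattern_eq hxy.symm (hxy ▸ hq) (by omega) (by omega) (by omega) (by omega)
  simp only [mk_mem_botCut] at hmem habove hleft
  omega

theorem pattern_subset_leftTip (hrow : x.1 % 2 ≠ y.1 % 2) (hcol : x.2 % 2 ≠ y.2 % 2) :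
    pattern (botCut N) x ⊆ leftTip N := by
  rintro ⟨k, m⟩ hq
  wlog hpar : (x.1 + k) % 2 = 0 generalizing x y
  · exact this hxy.symm hrow.symm hcol.symm (hxy ▸ hq) (by omega)
  have hx : (x.2 + m) % 2 ≤ (x.1 + k) % 2 := mod_two_le_of_mem_pattern hq
  have hmem := pattern_subset hq
  have hbelow : (k + 1, m) ∉ botCut N :=
    notMem_of_pattern_eq hxy hq (by omega) (by omega) (by omega) (by omega)
  simp only [leftTip, Set.mem_insert_iff, Set.mem_singleton_iff, Prod.mk.injEq]
  rcases m with - | m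
  · simp only [mk_mem_botCut, and_true] at hmem hbelow
    omega
  have hleft : (k, m) ∉ botCut N :=
    notMem_of_pattern_eq hxy.symm (hxy ▸ hq) (by omega) (by omega) (by omega) (by omega)
  simp only [mk_mem_botCut] at hmem hbelow hleft
  omega

theorem pattern_subset_rightTip (hrow : x.1 % 2 ≠ y.1 % 2) (hcol : x.2 % 2 = y.2 % 2) :
    pattern (botCut N) x ⊆ rightTip N := by
  rintro ⟨k, m⟩ hq
  wlog hpar : (x.1 + k) % 2 = 0 generalizing x y
  · exact this hxy.symm hrow.symm hcol.symm (hxy ▸ hq) (by omega)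
  have hx : (x.2 + m) % 2 ≤ (x.1 + k) % 2 := mod_two_le_of_mem_pattern hq
  have hmem := pattern_subset hq
  have hbelow : (k + 1, m + 1) ∉ botCut N :=
    notMem_of_pattern_eq hxy hq (by omega) (by omega) (by omega) (by omega)
  have hright : (k, m + 1) ∉ botCut N :=
    notMem_of_pattern_eq hxy.symm (hxy ▸ hq) (by omega) (by omega) (by omega) (by omega)
  simp only [mk_mem_botCut] at hmem hbelow hright
  simp only [rightTip, Set.mem_insert_iff, Set.mem_singleton_iff, Prod.mk.injEq]
  omega

end Overlap

theorem eq_empty_or_eq_pair {α : Type*} {s : Set α} {a b : α} (hs : s ⊆ {a, b})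
    (hab : a ∈ s ↔ b ∈ s) : s = ∅ ∨ s = {a, b} := by
  by_cases ha : a ∈ s
  · exact .inr (hs.antisymm (Set.insert_subset ha (Set.singleton_subset_iff.mpr (hab.mp ha))))
  · refine .inl (Set.eq_empty_of_forall_notMem fun q hq ↦ ?_)
    rcases hs hq with rfl | rfl
    exacts [ha hq, ha (hab.mpr hq)]

theorem pattern_eq_empty_or_leftTip (hN : 3 ≤ N)
    (hxy : pattern (botCut N) x = pattern (botCut N) y) (hrow : x.1 % 2 ≠ y.1 % 2)
    (hcol : x.2 % 2 ≠ y.2 % 2) :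
    pattern (botCut N) x = ∅ ∨ pattern (botCut N) x = leftTip N := by
  wlog hpar : (x.1 + (N - 2)) % 2 = 0 generalizing x y
  · exact hxy ▸ this hxy.symm hrow.symm hcol.symm (by omega)
  refine eq_empty_or_eq_pair (pattern_subset_leftTip hxy hrow hcol) ⟨fun h ↦ ?_, fun h ↦ ?_⟩
  · have hx : (x.2 + 0) % 2 ≤ (x.1 + (N - 2)) % 2 := mod_two_le_of_mem_pattern h
    have hmem : (N - 1, 1) ∈ botCut N := by rw [mk_mem_botCut]; omega
    exact mem_pattern_of_half_eq h hmem (by dsimp only; omega) (by dsimp only; omega)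
      (by dsimp only; omega)
  · have hy : (y.2 + 1) % 2 ≤ (y.1 + (N - 1)) % 2 := mod_two_le_of_mem_pattern (hxy ▸ h)
    have hmem : (N - 2, 0) ∈ botCut N := by rw [mk_mem_botCut]; omega
    exact mem_pattern_of_half_eq h hmem (by dsimp only; omega) (by dsimp only; omega)
      (by dsimp only; omega)

theorem pattern_eq_empty_or_rightTip (hN : 3 ≤ N)
    (hxy : pattern (botCut N) x = pattern (botCut N) y) (hrow : x.1 % 2 ≠ y.1 % 2)
    (hcol : x.2 % 2 = y.2 % 2) :
    pattern (botCut N) x = ∅ ∨ pattern (botCut N) x = rightTip N := by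
  wlog hpar : (x.1 + (N - 2)) % 2 = 0 generalizing x y
  · exact hxy ▸ this hxy.symm hrow.symm hcol.symm (by omega)
  refine eq_empty_or_eq_pair (pattern_subset_rightTip hxy hrow hcol) ⟨fun h ↦ ?_, fun h ↦ ?_⟩
  · have hx : (x.2 + (N - 2)) % 2 ≤ (x.1 + (N - 2)) % 2 := mod_two_le_of_mem_pattern h
    have hmem : (N - 1, N - 2) ∈ botCut N := by rw [mk_mem_botCut]; omega
    exact mem_pattern_of_half_eq h hmem (by dsimp only; omega) rfl (by dsimp only; omega)
  · have hy : (y.2 + (N - 2)) % 2 ≤ (y.1 + (N - 1)) % 2 := mod_two_le_of_mem_pattern (hxy ▸ h)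
    have hmem : (N - 2, N - 2) ∈ botCut N := by rw [mk_mem_botCut]; omega
    exact mem_pattern_of_half_eq h hmem (by dsimp only; omega) rfl (by dsimp only; omega)

open Classical in
/-- The patterns of size `N` without the bottom corners that occur in more than one class of
positions modulo two. -/
noncomputable def exceptional (N : ℕ) : Finset (Set (ℕ × ℕ)) :=
  {∅, topTip, leftTip N, rightTip N}

theorem pattern_mem_exceptional (hN : 3 ≤ N)
    (hxy : pattern (botCut N) x = pattern (botCut N) y) (hpar : ¬SameParity x y) :
    pattern (botCut N) x ∈ exceptional N := by
  simp only [exceptional, Finset.mem_insert, Finset.mem_singleton]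
  by_cases hrow : x.1 % 2 = y.1 % 2
  · have hcol : x.2 % 2 ≠ y.2 % 2 := fun h ↦ hpar ⟨hrow, h⟩
    have := Set.subset_singleton_iff_eq.mp (pattern_subset_topTip hxy hrow hcol)
    tauto
  · by_cases hcol : x.2 % 2 = y.2 % 2
    · have := pattern_eq_empty_or_rightTip hN hxy hrow hcol
      tauto
    · have := pattern_eq_empty_or_leftTip hN hxy hrow hcol
      tauto

/-! ### Occurrences of the exceptional patterns -/

theorem exists_even_period (K : ℕ) :
    ∃ t, K < t ∧ Even t ∧ (∀ j < t, Odd ((t - 1).choose j)) ∧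
      ∀ i, ∀ j < t, (Odd ((i + t).choose j) ↔ Odd (i.choose j)) := by
  have hK : K < 2 ^ (K + 1) := K.lt_succ_self.trans Nat.lt_two_pow_self
  refine ⟨2 ^ (K + 1), hK, even_two.pow_of_ne_zero K.succ_ne_zero, fun j hj ↦ ?_,
    fun i j hj ↦ odd_choose_add_two_pow_iff i hj⟩
  rw [← odd_choose_rotate_iff (s := K + 1) (by omega) (by omega), Nat.choose_self]
  exact odd_one

theorem empty_mem_patternsMod (N : ℕ) (c : ℕ × ℕ) : ∅ ∈ patternsMod (botCut N) c := by
  obtain ⟨t, ht, heven, -, hperiod⟩ := exists_even_period (2 * (c.1 + N) + c.2 + N)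
  rw [Nat.even_iff] at heven
  refine ⟨(c.1 + t, 2 * (c.1 + N) + c.2), ⟨by dsimp only; omega, by dsimp only; omega,
    by dsimp only; omega⟩, ?_⟩
  refine Set.eq_empty_of_forall_notMem fun ⟨k, m⟩ ⟨hq, hodd⟩ ↦ ?_
  rw [mk_mem_botCut] at hq
  dsimp only at hodd
  rw [add_right_comm, hperiod _ _ (by omega), Nat.choose_eq_zero_of_lt (by omega)] at hodd
  simp at hodd

theorem leftTip_mem_patternsMod_iff (hN : 3 ≤ N) :
    leftTip N ∈ patternsMod (botCut N) c ↔ (c.1 + c.2 + N) % 2 = 0 := by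
  constructor
  · rintro ⟨x, ⟨-, hx₁, hx₂⟩, hx⟩
    have hcorner : (N - 2, 0) ∈ pattern (botCut N) x := hx ▸ .inl rfl
    have hbelow : (N - 1, 1) ∈ pattern (botCut N) x := hx ▸ .inr rfl
    have h₁ : (x.2 + 0) % 2 ≤ (x.1 + (N - 2)) % 2 := mod_two_le_of_mem_pattern hcorner
    have h₂ : (x.2 + 1) % 2 ≤ (x.1 + (N - 1)) % 2 := mod_two_le_of_mem_pattern hbelow
    omega
  · intro hc
    obtain ⟨t, ht, heven, -, hperiod⟩ := exists_even_period (c.1 + N + N)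
    rw [Nat.even_iff] at heven
    -- The right side of the copy with apex `(t, 0)` cuts off the bottom-left corner of the window.
    refine ⟨(c.1 + t, c.1 + (N - 2)), ⟨by dsimp only; omega, by dsimp only; omega,
      by dsimp only; omega⟩, Set.ext fun ⟨k, m⟩ ↦ ⟨?_, ?_⟩⟩
    · rintro ⟨hq, hodd⟩
      rw [mk_mem_botCut] at hq
      dsimp only at hodd
      rw [add_right_comm, hperiod _ _ (by omega)] at hodd
      have hle : c.1 + (N - 2) + m ≤ c.1 + k :=
        not_lt.mp fun h ↦ by simp [Nat.choose_eq_zero_of_lt h] at hodd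
      simp only [leftTip, Set.mem_insert_iff, Set.mem_singleton_iff, Prod.mk.injEq]
      omega
    · intro hq
      simp only [leftTip, Set.mem_insert_iff, Set.mem_singleton_iff, Prod.mk.injEq] at hq
      refine ⟨(mk_mem_botCut k m).mpr (by omega), ?_⟩
      dsimp only
      rw [add_right_comm, hperiod _ _ (by omega), show c.1 + (N - 2) + m = c.1 + k by omega,
        Nat.choose_self]
      exact odd_one

theorem rightTip_mem_patternsMod_iff (hN : 3 ≤ N) :
    rightTip N ∈ patternsMod (botCut N) c ↔ c.2 % 2 = N % 2 := by
  constructor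
  · rintro ⟨x, ⟨-, hx₁, hx₂⟩, hx⟩
    have hcorner : (N - 2, N - 2) ∈ pattern (botCut N) x := hx ▸ .inl rfl
    have hbelow : (N - 1, N - 2) ∈ pattern (botCut N) x := hx ▸ .inr rfl
    have h₁ : (x.2 + (N - 2)) % 2 ≤ (x.1 + (N - 2)) % 2 := mod_two_le_of_mem_pattern hcorner
    have h₂ : (x.2 + (N - 2)) % 2 ≤ (x.1 + (N - 1)) % 2 := mod_two_le_of_mem_pattern hbelow
    omega
  · intro hc
    obtain ⟨t, ht, heven, -, hperiod⟩ := exists_even_period (c.1 + N + N)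
    rw [Nat.even_iff] at heven
    -- The left side of the copy with apex `(t, t)` cuts off the bottom-right corner of the window.
    refine ⟨(c.1 + t, t - (N - 2)), ⟨by dsimp only; omega, by dsimp only; omega,
      by dsimp only; omega⟩, Set.ext fun ⟨k, m⟩ ↦ ⟨?_, ?_⟩⟩
    · rintro ⟨hq, hodd⟩
      rw [mk_mem_botCut] at hq
      dsimp only at hodd
      rw [add_right_comm, ← Nat.choose_symm (by omega), hperiod _ _ (by omega)] at hodd
      have hle : c.1 + k + t - (t - (N - 2) + m) ≤ c.1 + k :=
        not_lt.mp fun h ↦ by simp [Nat.choose_eq_zero_of_lt h] at hodd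
      simp only [rightTip, Set.mem_insert_iff, Set.mem_singleton_iff, Prod.mk.injEq]
      omega
    · intro hq
      simp only [rightTip, Set.mem_insert_iff, Set.mem_singleton_iff, Prod.mk.injEq] at hq
      refine ⟨(mk_mem_botCut k m).mpr (by omega), ?_⟩
      dsimp only
      rw [add_right_comm, ← Nat.choose_symm (by omega), hperiod _ _ (by omega),
        show c.1 + k + t - (t - (N - 2) + m) = c.1 + k by omega, Nat.choose_self]
      exact odd_one

theorem topTip_mem_patternsMod_iff (hN : 3 ≤ N) :
    topTip ∈ patternsMod (botCut N) c ↔ c.1 % 2 = 1 := by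
  have hapex : (0, 0) ∈ botCut N := (mk_mem_botCut 0 0).mpr (by omega)
  constructor
  · rintro ⟨x, ⟨-, hx₁, -⟩, hx⟩
    by_contra hc
    have hodd : (0, 0) ∈ pattern (botCut N) x := hx ▸ rfl
    have hle : (x.2 + 0) % 2 ≤ (x.1 + 0) % 2 := mod_two_le_of_mem_pattern hodd
    have hmem : (1, 0) ∈ botCut N := (mk_mem_botCut 1 0).mpr (by omega)
    have hbelow : (1, 0) ∈ pattern (botCut N) x :=
      mem_pattern_of_half_eq hodd hmem (by dsimp only; omega) rfl (by dsimp only; omega)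
    simp [hx, topTip] at hbelow
  · intro hc
    obtain ⟨t, ht, heven, hlast, hperiod⟩ := exists_even_period (2 * N + c.2 + N)
    rw [Nat.even_iff] at heven
    -- Row `t - 1` is entirely filled, and the rows below it are blank away from their two ends.
    refine ⟨(t - 1, 2 * N + c.2), ⟨by dsimp only; omega, by dsimp only; omega,
      by dsimp only; omega⟩, Set.ext fun ⟨k, m⟩ ↦ ⟨?_, ?_⟩⟩
    · rintro ⟨hq, hodd⟩
      rw [mk_mem_botCut] at hq
      rcases k with - | k
      · obtain rfl : m = 0 := by omega
        rfl
      · dsimp only at hodd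
        rw [show t - 1 + (k + 1) = k + t by omega, hperiod _ _ (by omega),
          Nat.choose_eq_zero_of_lt (by omega)] at hodd
        simp at hodd
    · rintro ⟨rfl, rfl⟩
      exact ⟨hapex, hlast _ (by dsimp only; omega)⟩

/-! ### Counting -/

theorem sum_exceptional (hN : 3 ≤ N) (f : Set (ℕ × ℕ) → ℕ) :
    ∑ p ∈ exceptional N, f p = f ∅ + f topTip + f (leftTip N) + f (rightTip N) := by
  have hleft : leftTip N ≠ rightTip N := fun h ↦ by
    have hmem : (N - 2, 0) ∈ rightTip N := h ▸ .inl rfl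
    simp only [rightTip, Set.mem_insert_iff, Set.mem_singleton_iff, Prod.mk.injEq] at hmem
    omega
  have htop : (0, 0) ∉ leftTip N ∧ (0, 0) ∉ rightTip N := by
    simp only [leftTip, rightTip, Set.mem_insert_iff, Set.mem_singleton_iff, Prod.mk.injEq]
    omega
  have htop_ne : topTip ≠ leftTip N ∧ topTip ≠ rightTip N :=
    ⟨fun h ↦ htop.1 (h ▸ rfl), fun h ↦ htop.2 (h ▸ rfl)⟩
  have hempty : ∅ ≠ topTip ∧ ∅ ≠ leftTip N ∧ ∅ ≠ rightTip N :=
    ⟨(Set.singleton_ne_empty _).symm, (Set.insert_nonempty _ _).ne_empty.symm,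
      (Set.insert_nonempty _ _).ne_empty.symm⟩
  rw [exceptional, Finset.sum_insert (by simp [hempty]), Finset.sum_insert (by simp [htop_ne]),
    Finset.sum_pair hleft, add_assoc, add_assoc]

open Classical in
theorem sum_ncard_patternsMod (hw : w.Finite) (C : Finset (ℕ × ℕ)) :
    ∑ c ∈ C, (patternsMod w c).ncard =
      ∑ p ∈ (patterns_finite hw).toFinset, #{c ∈ C | p ∈ patternsMod w c} := by
  refine .trans (Finset.sum_congr rfl fun c _ ↦ ?_)
    (Finset.sum_card_bipartiteAbove_eq_sum_card_bipartiteBelow fun c p ↦ p ∈ patternsMod w c)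
  rw [← Set.ncard_coe_finset, Finset.coe_bipartiteAbove]
  congr 1
  ext p
  simpa using fun h ↦ patternsMod_subset_patterns h

open Classical in
theorem card_filter_mem_patternsMod (hN : 3 ≤ N) {p : Set (ℕ × ℕ)} (hp : p ∈ patterns (botCut N))
    (hexc : p ∉ exceptional N) : #{c ∈ offsets | p ∈ patternsMod (botCut N) c} = 1 := by
  obtain ⟨x, hx, rfl⟩ := hp
  rw [← card_filter_sameParity_offsets x]
  congr 1
  refine Finset.filter_congr fun c _ ↦ ⟨?_, fun h ↦ ⟨x, ⟨hx, h⟩, rfl⟩⟩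
  rintro ⟨y, ⟨-, hyc⟩, hyx⟩
  by_contra hxc
  have hxy : ¬SameParity x y := fun h ↦ hxc ⟨h.1.trans hyc.1, h.2.trans hyc.2⟩
  exact hexc (pattern_mem_exceptional hN hyx.symm hxy)

open Classical in
theorem sum_exceptional_card_filter (hN : 3 ≤ N) :
    ∑ p ∈ exceptional N, #{c ∈ offsets | p ∈ patternsMod (botCut N) c} = 10 := by
  rw [sum_exceptional hN]
  simp only [empty_mem_patternsMod, topTip_mem_patternsMod_iff hN, leftTip_mem_patternsMod_iff hN,
    rightTip_mem_patternsMod_iff hN, Nat.add_mod _ N]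
  rcases Nat.mod_two_eq_zero_or_one N with h | h <;> simp only [h] <;> rfl

theorem mem_patterns_of_mem_exceptional (hN : 3 ≤ N) {p : Set (ℕ × ℕ)} (hp : p ∈ exceptional N) :
    p ∈ patterns (botCut N) := by
  simp only [exceptional, Finset.mem_insert, Finset.mem_singleton] at hp
  rcases hp with rfl | rfl | rfl | rfl
  · exact patternsMod_subset_patterns (empty_mem_patternsMod N (0, 0))
  · exact patternsMod_subset_patterns ((topTip_mem_patternsMod_iff (c := (1, 0)) hN).mpr rfl)
  · exact patternsMod_subset_patterns
      ((leftTip_mem_patternsMod_iff (c := (N, 0)) hN).mpr (by dsimp only; omega))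
  · exact patternsMod_subset_patterns ((rightTip_mem_patternsMod_iff (c := (0, N)) hN).mpr rfl)

theorem sum_ncard_patternsMod_botCut (hN : 3 ≤ N) :
    ∑ c ∈ offsets, (patternsMod (botCut N) c).ncard = (patterns (botCut N)).ncard + 6 := by
  classical
  have hfin : (botCut N).Finite := (full_finite N).sdiff
  have hexc : exceptional N ⊆ (patterns_finite hfin).toFinset := fun p hp ↦
    (Set.Finite.mem_toFinset _).mpr (mem_patterns_of_mem_exceptional hN hp)
  have hcard : #(exceptional N) = 4 := by
    rw [Finset.card_eq_sum_ones, sum_exceptional hN]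
  have hsimple : ∑ p ∈ (patterns_finite hfin).toFinset \ exceptional N,
      #{c ∈ offsets | p ∈ patternsMod (botCut N) c} =
        #((patterns_finite hfin).toFinset \ exceptional N) := by
    rw [Finset.card_eq_sum_ones]
    refine Finset.sum_congr rfl fun p hp ↦ ?_
    rw [Finset.mem_sdiff, Set.Finite.mem_toFinset] at hp
    exact card_filter_mem_patternsMod hN hp.1 hp.2
  rw [sum_ncard_patternsMod hfin, ← Finset.sum_sdiff hexc, sum_exceptional_card_filter hN, hsimple,
    Set.ncard_eq_toFinset_card _ (patterns_finite hfin), ← Finset.card_sdiff_add_card_eq_card hexc,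
    hcard]

theorem ncard_patterns_botCut_add_six (hN : 3 ≤ N) :
    (patterns (botCut N)).ncard + 6 =
      (patterns (coarsen (botCut N) (0, 0))).ncard + (patterns (coarsen (botCut N) (1, 0))).ncard +
        (patterns (coarsen (botCut N) (1, 1))).ncard +
          (patterns (coarsen (botCut N) (2, 1))).ncard := by
  rw [← sum_ncard_patternsMod_botCut hN, Finset.sum_congr rfl fun c hc ↦ ncard_patternsMod hc]
  simp [offsets, add_assoc]

theorem ncard_patterns_botCut_two_mul (hn : 2 ≤ n) :
    (patterns (botCut (2 * n))).ncard + 6 =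
      (patterns (full n)).ncard + 2 * (patterns (botCut (n + 1))).ncard +
        (patterns (fullyCut (n + 1))).ncard := by
  rw [ncard_patterns_botCut_add_six (by omega), coarsen_botCut_two_mul_zero_zero hn,
    coarsen_botCut_two_mul_one_zero hn, coarsen_botCut_two_mul_one_one hn,
    coarsen_botCut_two_mul_two_one hn]
  ring

theorem ncard_patterns_botCut_two_mul_add_one (hn : 1 ≤ n) :
    (patterns (botCut (2 * n + 1))).ncard + 6 =
      (patterns (botCut (n + 1))).ncard + 2 * (patterns (topCut (n + 1))).ncard +
        (patterns (fullyCut (n + 2))).ncard := by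
  rw [ncard_patterns_botCut_add_six (by omega), coarsen_botCut_two_mul_add_one_zero_zero hn,
    coarsen_botCut_two_mul_add_one_one_zero hn, coarsen_botCut_two_mul_add_one_one_one hn,
    coarsen_botCut_two_mul_add_one_two_one, ncard_patterns_leftCut, ncard_patterns_rightCut]
  ring

/-! ### Boolean patterns -/

open Classical in
/-- The Boolean-valued function on units with which the paper represents the pattern `p`: its
columns also count the downward units. -/
noncomputable def coloring (p : Set (ℕ × ℕ)) (q : ℕ × ℕ) : Bool :=
  decide (q.2 % 2 = 0 ∧ (q.1, q.2 / 2) ∈ p)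

theorem coloring_injective : Function.Injective coloring := by
  intro p p' h
  ext ⟨k, m⟩
  simpa [coloring] using congrFun h (k, 2 * m)

theorem coloring_pattern (Q : ℕ × ℕ → Prop) [DecidablePred Q]
    (hQ : ∀ k m, Q (k, 2 * m) ↔ (k, m) ∈ w) (r j : ℕ) :
    coloring (pattern w (r, j)) =
      fun q ↦ if Q q then filled (r + q.1) (2 * j + q.2) else false := by
  funext ⟨k, l⟩
  rcases Nat.even_or_odd' l with ⟨m, rfl | rfl⟩
  · simp [coloring, pattern, filled, ← hQ, Nat.odd_iff, ← Nat.mul_add]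
  · have hodd : (2 * j + (2 * m + 1)) % 2 = 1 := by omega
    simp [coloring, filled, hodd]

theorem ncard_setOf_eq_ncard_patterns (Q : ℕ × ℕ → Prop) [DecidablePred Q]
    (hQ : ∀ k m, Q (k, 2 * m) ↔ (k, m) ∈ w) :
    {p | ∃ r c : ℕ, c % 2 = 0 ∧ c ≤ 2 * r ∧
      p = fun q : ℕ × ℕ ↦ if Q q then filled (r + q.1) (c + q.2) else false}.ncard =
        (patterns w).ncard := by
  rw [← Set.ncard_image_of_injective _ coloring_injective]
  congr 1
  ext p
  constructor
  · rintro ⟨r, c, hc, hcr, rfl⟩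
    obtain ⟨j, rfl⟩ := Nat.dvd_of_mod_eq_zero hc
    exact ⟨_, ⟨(r, j), Nat.le_of_mul_le_mul_left hcr two_pos, rfl⟩, coloring_pattern Q hQ r j⟩
  · rintro ⟨_, ⟨⟨r, j⟩, hjr, rfl⟩, rfl⟩
    exact ⟨r, 2 * j, Nat.mul_mod_right 2 j, Nat.mul_le_mul_left 2 hjr, coloring_pattern Q hQ r j⟩

theorem ncard_Pup (N : ℕ) : (Pup N).ncard = (patterns (full N)).ncard :=
  ncard_setOf_eq_ncard_patterns _ fun k m ↦ by
    simp only [mk_mem_full]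
    omega

theorem ncard_PtopCut (N : ℕ) : (PtopCut N).ncard = (patterns (topCut N)).ncard :=
  ncard_setOf_eq_ncard_patterns _ fun k m ↦ by
    simp only [mk_mem_topCut]
    omega

theorem ncard_PbotCut (N : ℕ) : (PbotCut N).ncard = (patterns (botCut N)).ncard :=
  ncard_setOf_eq_ncard_patterns _ fun k m ↦ by
    simp only [mk_mem_botCut]
    omega

theorem ncard_PfullyCut (N : ℕ) : (PfullyCut N).ncard = (patterns (fullyCut N)).ncard :=
  ncard_setOf_eq_ncard_patterns _ fun k m ↦ by
    simp only [mk_mem_fullyCut, ne_eq, Prod.mk.injEq]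
    omega

end Sierpinski

theorem sierpinski_recursion_C (n : ℕ) (hn : 2 ≤ n) :
    (PbotCut (2 * n)).ncard + 6 =
      (Pup n).ncard + 2 * (PbotCut (n + 1)).ncard + (PfullyCut (n + 1)).ncard ∧
    (PbotCut (2 * n + 1)).ncard + 6 =
      (PbotCut (n + 1)).ncard + 2 * (PtopCut (n + 1)).ncard + (PfullyCut (n + 2)).ncard := by
  rw [Sierpinski.ncard_PbotCut, Sierpinski.ncard_PbotCut, Sierpinski.ncard_PbotCut,
    Sierpinski.ncard_Pup, Sierpinski.ncard_PtopCut, Sierpinski.ncard_PfullyCut,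
    Sierpinski.ncard_PfullyCut]
  exact ⟨Sierpinski.ncard_patterns_botCut_two_mul hn,
    Sierpinski.ncard_patterns_botCut_two_mul_add_one (one_le_two.trans hn)⟩
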